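/- Let P be a Markov kernel on a standard Borel space X, let (u,C) be a drift function with constant b, let p > 2, let g ∈ E_u^p, and let x ∈ X with u(x) < ∞. Then: (a) for every ε > 0, (1/n) ∑_{k=0}^{n−1} 𝔼_x[(g(X_{k+1}) − Pg(X_k))² · 1_{|g(X_{k+1}) − Pg(X_k)| ≥ ε√n}] → 0 as n → ∞; (b) for every ε > 0, ∑_{n=1}^{∞} n^{−1/2} 𝔼_x[|g(X_{n+1}) − Pg(X_n)| · 1_{|g(X_{n+1}) − Pg(X_n)| ≥ ε√n}] < ∞; (c) there exists δ > 0 such that ∑_{n=1}^{∞} n^{−2} 𝔼_x[(g(X_{n+1}) − Pg(X_n))⁴ · 1_{|g(X_{n+1}) − Pg(X_n)| ≤ δ√n}] < ∞. -/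

import Mathlib

open MeasureTheory ProbabilityTheory Filter Set
open scoped ENNReal NNReal

/-- The action of a Markov kernel on `[0,∞]`-valued functions: `Pf(x) = ∫ f(y) P(x,dy)`. -/
noncomputable def kernelOp {X : Type*} [MeasurableSpace X] (P : ProbabilityTheory.Kernel X X)
    (f : X → ℝ≥0∞) : X → ℝ≥0∞ :=
  fun x => ∫⁻ y, f y ∂(P x)

/-- The action of a Markov kernel on real-valued functions: `Pf(x) = ∫ f(y) P(x,dy)`. -/
noncomputable def kernelOpReal {X : Type*} [MeasurableSpace X] (P : ProbabilityTheory.Kernel X X)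
    (f : X → ℝ) : X → ℝ :=
  fun x => ∫ y, f y ∂(P x)

/-- `(u, C)` is a drift function for the Markov kernel `P`, with constant `b`. -/
structure IsDriftFunction {X : Type*} [MeasurableSpace X] (P : ProbabilityTheory.Kernel X X)
    (u : X → ℝ≥0∞) (C : Set X) (b : ℝ≥0) : Prop where
  measurable_u : Measurable u
  one_le : ∀ x, 1 ≤ u x
  measurableSet_C : MeasurableSet C
  bddOn_C : ∃ M : ℝ≥0, ∀ x ∈ C, u x ≤ M
  drift : ∀ x, kernelOp P u x ≤ u x + C.indicator (fun _ => (b : ℝ≥0∞)) x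

/-- `f ∈ E_u^p` with `‖f‖_{E_u^p} ≤ M`. -/
def MemDriftSpace {X : Type*} [MeasurableSpace X] (P : ProbabilityTheory.Kernel X X)
    (u : X → ℝ≥0∞) (C : Set X) (b : ℝ≥0) (p : ℝ) (f : X → ℝ) (M : ℝ≥0) : Prop :=
  Measurable f ∧ ∀ x, (‖f x‖₊ : ℝ≥0∞) ≤
    (M : ℝ≥0∞) * (u x - kernelOp P u x + C.indicator (fun _ => (b : ℝ≥0∞)) x) ^ (1 / p)

/-- `μ` is the law `ℙ_x` on `X^ℕ` of the canonical Markov chain with kernel `P` started at `x`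
(the Ionescu–Tulcea measure). -/
def IsCanonicalChain {X : Type*} [MeasurableSpace X] (P : ProbabilityTheory.Kernel X X)
    (x : X) (μ : Measure (ℕ → X)) : Prop :=
  IsProbabilityMeasure μ ∧
  μ.map (fun ω => ω 0) = Measure.dirac x ∧
  ∀ n : ℕ, ∀ g : X → ℝ≥0∞, Measurable g →
    ∀ h : (ℕ → X) → ℝ≥0∞,
      Measurable[MeasurableSpace.comap (fun (ω : ℕ → X) (i : Fin (n + 1)) => ω i)
        MeasurableSpace.pi] h →
      ∫⁻ ω, h ω * g (ω (n + 1)) ∂μ = ∫⁻ ω, h ω * kernelOp P g (ω n) ∂μ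

lemma abel_real (K : ℝ) (c r : ℕ → ℝ) (hr : Antitone r)
    (hS : ∀ n, ∑ k ∈ Finset.range n, c k ≤ K * (n + 1)) (n : ℕ) :
    ∑ k ∈ Finset.range n, r k * c k + r n * (K * (n + 1) - ∑ k ∈ Finset.range n, c k)
      ≤ K * (r 0 + ∑ k ∈ Finset.range n, r k) := by
  induction n with
  | zero => simp; linarith
  | succ n ih =>
    have h1 := hr (Nat.le_succ n)
    have h2 := hS (n + 1)
    simp only [Finset.sum_range_succ] at *
    push_cast at *
    nlinarith [mul_le_mul_of_nonneg_right h1 (sub_nonneg.2 h2)]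

lemma abel_ennreal (K : ℝ≥0) (c : ℕ → ℝ≥0∞) (s : ℝ) (hs : 1 < s)
    (hS : ∀ n, ∑ k ∈ Finset.range n, c k ≤ K * ((n : ℝ≥0∞) + 1)) :
    ∑' n : ℕ, ENNReal.ofReal (((n : ℝ) + 1) ^ (-s)) * c n ≠ ∞ := by
  have hc : ∀ n, c n ≠ ∞ := fun n => by
    refine ne_top_of_le_ne_top (b := K * (((n + 1 : ℕ) : ℝ≥0∞) + 1)) ?_
      (le_trans ?_ (hS (n + 1)))
    · exact ENNReal.mul_ne_top (by simp) (by simp)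
    · rw [Finset.sum_range_succ]; exact le_add_self
  lift c to ℕ → ℝ≥0 using hc
  have hS' : ∀ n, ∑ k ∈ Finset.range n, (c k : ℝ) ≤ K * (n + 1) := fun n => by
    have := hS n
    have h2 : ((∑ k ∈ Finset.range n, c k : ℝ≥0) : ℝ≥0∞) ≤ ((K * (n + 1) : ℝ≥0) : ℝ≥0∞) := by
      push_cast; exact this
    have h3 := ENNReal.coe_le_coe.1 h2
    exact_mod_cast h3
  have hr : Antitone (fun n : ℕ => ((n : ℝ) + 1) ^ (-s)) := by
    intro m n hmn
    have : (m : ℝ) ≤ n := by exact_mod_cast hmn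
    exact Real.rpow_le_rpow_of_nonpos (by positivity) (by linarith) (by linarith)
  have hsum : Summable (fun n : ℕ => ((n : ℝ) + 1) ^ (-s)) := by
    have := (summable_nat_add_iff 1).2 (Real.summable_nat_rpow.2 (by linarith : -s < -1))
    simpa using this
  have hsum2 : Summable (fun n : ℕ => ((n : ℝ) + 1) ^ (-s) * (c n : ℝ)) := by
    refine summable_of_sum_range_le (c := K * (((0 : ℕ) + 1 : ℝ) ^ (-s) + ∑' n : ℕ, ((n : ℝ) + 1) ^ (-s))) (fun n => by positivity) fun n => ?_
    have h1 := abel_real K (fun n => (c n : ℝ)) _ hr hS' n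
    have h2 : 0 ≤ ((n : ℝ) + 1) ^ (-s) * (K * (n + 1) - ∑ k ∈ Finset.range n, (c k : ℝ)) :=
      mul_nonneg (by positivity) (sub_nonneg.2 (hS' n))
    have h3 : ∑ k ∈ Finset.range n, ((k : ℝ) + 1) ^ (-s) ≤ ∑' n : ℕ, ((n : ℝ) + 1) ^ (-s) :=
      hsum.sum_le_tsum _ (fun i _ => by positivity)
    have h4 := mul_le_mul_of_nonneg_left h3 K.2
    simp only [mul_add] at *
    change (K : ℝ) * _ ≤ K * _ at h4
    linarith
  have : ∀ n : ℕ, ENNReal.ofReal (((n : ℝ) + 1) ^ (-s)) * (c n : ℝ≥0∞)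
      = ENNReal.ofReal (((n : ℝ) + 1) ^ (-s) * (c n : ℝ)) := fun n => by
    rw [ENNReal.ofReal_mul (by positivity), ENNReal.ofReal_coe_nnreal]
  simp_rw [this]
  exact hsum2.tsum_ofReal_ne_top

lemma pow_lower (a d q : ℝ) (j : ℕ) (ha : 0 < a) (had : a ≤ d) (hq : (j : ℝ) ≤ q) :
    ENNReal.ofReal (d ^ j) ≤ ENNReal.ofReal (a ^ ((j : ℝ) - q)) * ENNReal.ofReal d ^ q := by
  have hd := ha.trans_le had
  rw [ENNReal.ofReal_rpow_of_pos hd, ← ENNReal.ofReal_mul (by positivity)]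
  apply ENNReal.ofReal_le_ofReal
  calc d ^ j = d ^ ((j : ℝ) - q) * d ^ q := by
        rw [← Real.rpow_add hd, sub_add_cancel, Real.rpow_natCast]
    _ ≤ _ := by
      gcongr ?_ * _
      exact Real.rpow_le_rpow_of_nonpos ha had (by linarith)

lemma pow_upper (a d q : ℝ) (j : ℕ) (hj : j ≠ 0) (hd0 : 0 ≤ d) (had : d ≤ a) (hq0 : 0 ≤ q)
    (hq : q ≤ (j : ℝ)) :
    ENNReal.ofReal (d ^ j) ≤ ENNReal.ofReal (a ^ ((j : ℝ) - q)) * ENNReal.ofReal d ^ q := by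
  have ha : 0 ≤ a := hd0.trans had
  rw [ENNReal.ofReal_rpow_of_nonneg hd0 hq0, ← ENNReal.ofReal_mul (by positivity)]
  apply ENNReal.ofReal_le_ofReal
  rcases hd0.eq_or_lt with h | hd
  · rw [← h, zero_pow hj]; positivity
  calc d ^ j = d ^ ((j : ℝ) - q) * d ^ q := by
        rw [← Real.rpow_add hd, sub_add_cancel, Real.rpow_natCast]
    _ ≤ _ := by
      gcongr ?_ * _
      exact Real.rpow_le_rpow hd.le had (by linarith)

lemma drift_step {X : Type*} [MeasurableSpace X] (P : ProbabilityTheory.Kernel X X)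
    (u : X → ℝ≥0∞) (C : Set X) (b : ℝ≥0) (hu : IsDriftFunction P u C b) (y : X) :
    (u y - kernelOp P u y + C.indicator (fun _ => (b : ℝ≥0∞)) y) + kernelOp P u y
      ≤ u y + 2 * b := by
  have h := hu.drift y
  have hi : C.indicator (fun _ => (b : ℝ≥0∞)) y ≤ b := by
    by_cases hy : y ∈ C <;> simp [hy]
  set i := C.indicator (fun _ => (b : ℝ≥0∞)) y
  rcases le_total (kernelOp P u y) (u y) with h1 | h1
  · rw [add_right_comm, tsub_add_cancel_of_le h1]
    gcongr
    exact hi.trans (by rw [two_mul]; exact le_self_add)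
  · rw [tsub_eq_zero_of_le h1, zero_add, two_mul, add_comm, ← add_assoc]
    gcongr
    exact h.trans (by gcongr)

lemma measurable_kernelOp {X : Type*} [MeasurableSpace X] (P : ProbabilityTheory.Kernel X X)
    (f : X → ℝ≥0∞) (hf : Measurable f) : Measurable (kernelOp P f) :=
  hf.lintegral_kernel

lemma chain_step {X : Type*} [MeasurableSpace X] (P : ProbabilityTheory.Kernel X X)
    (x : X) (μ : Measure (ℕ → X)) (hμ : IsCanonicalChain P x μ) (f : X → ℝ≥0∞)
    (hf : Measurable f) (n : ℕ) :
    ∫⁻ ω, f (ω (n + 1)) ∂μ = ∫⁻ ω, kernelOp P f (ω n) ∂μ := by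
  have := hμ.2.2 n f hf (fun _ => 1) measurable_const
  simpa using this

lemma sum_w_le {X : Type*} [MeasurableSpace X] (P : ProbabilityTheory.Kernel X X)
    (u : X → ℝ≥0∞) (C : Set X) (b : ℝ≥0) (hu : IsDriftFunction P u C b)
    (x : X) (μ : Measure (ℕ → X)) (hμ : IsCanonicalChain P x μ) (n : ℕ) :
    ∑ k ∈ Finset.range n,
      ∫⁻ ω, (u (ω k) - kernelOp P u (ω k) + C.indicator (fun _ => (b : ℝ≥0∞)) (ω k)) ∂μ
      + ∫⁻ ω, u (ω n) ∂μ ≤ u x + n * (2 * b) := by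
  have := hμ.1
  have hm := hu.measurable_u
  have hPm := measurable_kernelOp P u hm
  have hPn : ∀ n : ℕ, Measurable (fun ω : ℕ → X => kernelOp P u (ω n)) := fun n =>
    hPm.comp (measurable_pi_apply (X := fun _ : ℕ => X) n)
  induction n with
  | zero =>
    have h := lintegral_map (μ := μ) hm (measurable_pi_apply (X := fun _ : ℕ => X) 0)
    rw [hμ.2.1, lintegral_dirac' x hm] at h
    simp [h]
  | succ n ih =>
    rw [Finset.sum_range_succ, chain_step P x μ hμ u hm n, add_assoc,
      ← lintegral_add_right _ (hPn n)]
    have h1 : ∫⁻ ω, ((u (ω n) - kernelOp P u (ω n) + C.indicator (fun _ => (b : ℝ≥0∞)) (ω n))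
        + kernelOp P u (ω n)) ∂μ ≤ ∫⁻ ω, u (ω n) ∂μ + 2 * b := by
      refine (lintegral_mono fun ω : ℕ → X => drift_step P u C b hu (ω n)).trans (le_of_eq ?_)
      rw [lintegral_add_right _ measurable_const]; simp
    refine (add_le_add_right h1 _).trans ?_
    rw [← add_assoc]
    refine (add_le_add_left ih _).trans (le_of_eq ?_)
    push_cast; ring

lemma jensen {X : Type*} [MeasurableSpace X] (ν : Measure X) [IsProbabilityMeasure ν]
    (g : X → ℝ) (hg : Measurable g) (p : ℝ) (hp : 1 ≤ p) :
    ‖∫ y, g y ∂ν‖ₑ ^ p ≤ ∫⁻ y, ‖g y‖ₑ ^ p ∂ν := by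
  have h0 : 0 < p := by linarith
  have h := eLpNorm'_le_eLpNorm'_of_exponent_le (p := 1) (q := p) zero_lt_one hp ν
    hg.aestronglyMeasurable
  simp only [eLpNorm', ENNReal.rpow_one, div_one] at h
  calc _ ≤ ((∫⁻ y, ‖g y‖ₑ ^ p ∂ν) ^ (1 / p)) ^ p := by
        gcongr
        exact (enorm_integral_le_lintegral_enorm _).trans h
    _ = _ := by rw [← ENNReal.rpow_mul, one_div_mul_cancel h0.ne', ENNReal.rpow_one]

lemma D_le {X : Type*} [MeasurableSpace X] (P : ProbabilityTheory.Kernel X X) [IsMarkovKernel P]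
    (u : X → ℝ≥0∞) (C : Set X) (b : ℝ≥0)
    (p : ℝ) (hp : 2 < p) (g : X → ℝ) (M : ℝ≥0) (hg : MemDriftSpace P u C b p g M)
    (x : X) (μ : Measure (ℕ → X)) (hμ : IsCanonicalChain P x μ) (k : ℕ) :
    ∫⁻ ω, ‖g (ω (k + 1)) - kernelOpReal P g (ω k)‖ₑ ^ p ∂μ ≤
      (2 : ℝ≥0∞) ^ (p - 1) * (2 * ((M : ℝ≥0∞) ^ p * ∫⁻ ω, (u (ω (k + 1)) - kernelOp P u (ω (k + 1))
        + C.indicator (fun _ => (b : ℝ≥0∞)) (ω (k + 1))) ∂μ)) := by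
  have h0 : 0 < p := by linarith
  have hgm := hg.1
  have hG : Measurable (fun y => ‖g y‖ₑ ^ p) := by fun_prop
  have hGk : Measurable (fun ω : ℕ → X => ‖g (ω (k + 1))‖ₑ ^ p) :=
    hG.comp (measurable_pi_apply (X := fun _ : ℕ => X) (k + 1))
  have hGw : ∫⁻ ω, ‖g (ω (k + 1))‖ₑ ^ p ∂μ ≤
      (M : ℝ≥0∞) ^ p * ∫⁻ ω, (u (ω (k + 1)) - kernelOp P u (ω (k + 1))
        + C.indicator (fun _ => (b : ℝ≥0∞)) (ω (k + 1))) ∂μ := by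
    rw [← lintegral_const_mul' _ _ (by simp [h0.le])]
    refine lintegral_mono fun ω => ?_
    calc _ ≤ _ := ENNReal.rpow_le_rpow (hg.2 (ω (k + 1))) h0.le
      _ = _ := by
        rw [ENNReal.mul_rpow_of_nonneg _ _ h0.le, ← ENNReal.rpow_mul, one_div_mul_cancel h0.ne',
          ENNReal.rpow_one]
  calc _ ≤ ∫⁻ ω, (2 : ℝ≥0∞) ^ (p - 1) *
        (‖g (ω (k + 1))‖ₑ ^ p + kernelOp P (fun y => ‖g y‖ₑ ^ p) (ω k)) ∂μ := by
        refine lintegral_mono fun ω => ?_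
        calc _ ≤ (‖g (ω (k + 1))‖ₑ + ‖kernelOpReal P g (ω k)‖ₑ) ^ p := by
              gcongr; exact enorm_sub_le
          _ ≤ (2 : ℝ≥0∞) ^ (p - 1) * (‖g (ω (k + 1))‖ₑ ^ p + ‖kernelOpReal P g (ω k)‖ₑ ^ p) :=
              ENNReal.rpow_add_le_mul_rpow_add_rpow _ _ (by linarith)
          _ ≤ _ := by
              gcongr
              exact jensen (P (ω k)) g hgm p (by linarith)
    _ ≤ _ := by
      rw [lintegral_const_mul' _ _ (by simp),
        lintegral_add_left hGk,
        ← chain_step P x μ hμ _ hG k, ← two_mul]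
      gcongr

/-- Linear growth of the partial sums of the `q`-th moments. -/
lemma moments {X : Type*} [MeasurableSpace X] (P : ProbabilityTheory.Kernel X X) [IsMarkovKernel P]
    (u : X → ℝ≥0∞) (C : Set X) (b : ℝ≥0) (hu : IsDriftFunction P u C b)
    (p : ℝ) (hp : 2 < p) (g : X → ℝ) (M : ℝ≥0) (hg : MemDriftSpace P u C b p g M)
    (x : X) (hx : u x < ∞) (μ : Measure (ℕ → X)) (hμ : IsCanonicalChain P x μ)
    (q : ℝ) (hq0 : 0 ≤ q) (hqp : q ≤ p) :
    ∃ K : ℝ≥0, ∀ n : ℕ, ∑ k ∈ Finset.range n,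
      ∫⁻ ω, ‖g (ω (k + 1)) - kernelOpReal P g (ω k)‖ₑ ^ q ∂μ ≤ K * ((n : ℝ≥0∞) + 1) := by
  have := hμ.1
  set A : ℝ≥0∞ := (2 : ℝ≥0∞) ^ (p - 1) * (2 * (M : ℝ≥0∞) ^ p) with hA
  have hAt : A ≠ ∞ := by
    rw [hA]
    exact ENNReal.mul_ne_top (by simp) (ENNReal.mul_ne_top (by simp) (by simp [show 0 ≤ p by linarith]))
  set K : ℝ≥0∞ := 1 + A * (u x + 2 * b) with hK
  have hKt : K ≠ ∞ := by
    rw [hK]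
    simp [ENNReal.mul_eq_top, hAt, hx.ne]
  refine ⟨K.toNNReal, fun n => ?_⟩
  rw [ENNReal.coe_toNNReal hKt]
  set w : ℕ → ℝ≥0∞ := fun k => ∫⁻ ω, (u (ω k) - kernelOp P u (ω k)
        + C.indicator (fun _ => (b : ℝ≥0∞)) (ω k)) ∂μ with hw
  have h1 : ∀ k, ∫⁻ ω, ‖g (ω (k + 1)) - kernelOpReal P g (ω k)‖ₑ ^ q ∂μ ≤ 1 + A * w (k + 1) := by
    intro k
    calc _ ≤ ∫⁻ ω, (1 + ‖g (ω (k + 1)) - kernelOpReal P g (ω k)‖ₑ ^ p) ∂μ := by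
          refine lintegral_mono fun ω => ?_
          rcases le_total ‖g (ω (k + 1)) - kernelOpReal P g (ω k)‖ₑ 1 with h | h
          · exact (ENNReal.rpow_le_one h hq0).trans le_self_add
          · exact (ENNReal.rpow_le_rpow_of_exponent_le h hqp).trans le_add_self
      _ = 1 + ∫⁻ ω, ‖g (ω (k + 1)) - kernelOpReal P g (ω k)‖ₑ ^ p ∂μ := by
          rw [lintegral_add_left measurable_const]; simp
      _ ≤ _ := by
          gcongr
          refine (D_le P u C b p hp g M hg x μ hμ k).trans (le_of_eq ?_)
          rw [hA, hw]; ring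
  calc _ ≤ ∑ k ∈ Finset.range n, (1 + A * w (k + 1)) := Finset.sum_le_sum fun k _ => h1 k
    _ = n + A * ∑ k ∈ Finset.range n, w (k + 1) := by
        rw [Finset.sum_add_distrib, Finset.mul_sum]; simp
    _ ≤ n + A * ∑ k ∈ Finset.range (n + 1), w k := by
        gcongr
        rw [Finset.sum_range_succ']; exact le_self_add
    _ ≤ n + A * (u x + (n + 1 : ℕ) * (2 * b)) := by
        gcongr
        exact le_self_add.trans (sum_w_le P u C b hu x μ hμ (n + 1))
    _ ≤ (n + 1) + A * ((n + 1) * u x + (n + 1) * (2 * b)) := by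
        push_cast
        gcongr
        · exact le_self_add
        · exact le_mul_of_one_le_left (by simp) le_add_self
    _ = _ := by rw [hK]; ring

open Classical in
/-- (Lindeberg-type conditions for martingale increments dominated by a drift
function.) With `D_k = g(X_{k+1}) − Pg(X_k)`: (a) `(1/n) ∑_{k<n} 𝔼_x[D_k² 1_{|D_k| ≥ ε√n}] → 0`;
(b) `∑_{n≥1} n^{−1/2} 𝔼_x[|D_n| 1_{|D_n| ≥ ε√n}] < ∞`;
(c) for some `δ > 0`, `∑_{n≥1} n^{−2} 𝔼_x[D_n⁴ 1_{|D_n| ≤ δ√n}] < ∞`. -/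
theorem stmt8 {X : Type*} [MeasurableSpace X] [StandardBorelSpace X]
    (P : ProbabilityTheory.Kernel X X) [IsMarkovKernel P]
    (u : X → ℝ≥0∞) (C : Set X) (b : ℝ≥0) (hu : IsDriftFunction P u C b)
    (p : ℝ) (hp : 2 < p)
    (g : X → ℝ) (M : ℝ≥0) (hg : MemDriftSpace P u C b p g M)
    (x : X) (hx : u x < ∞)
    (μ : Measure (ℕ → X)) (hμ : IsCanonicalChain P x μ)
    (D : ℕ → (ℕ → X) → ℝ) (hD : ∀ k ω, D k ω = g (ω (k + 1)) - kernelOpReal P g (ω k)) :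
    (∀ ε : ℝ, 0 < ε → Tendsto
      (fun n : ℕ => (n : ℝ≥0∞)⁻¹ * ∑ k ∈ Finset.range n,
        ∫⁻ ω, ENNReal.ofReal
          (if ε * Real.sqrt n ≤ |D k ω| then (D k ω) ^ 2 else 0) ∂μ)
      atTop (nhds 0)) ∧
    (∀ ε : ℝ, 0 < ε →
      (∑' n : ℕ, (ENNReal.ofReal (Real.sqrt (n + 1)))⁻¹ *
        ∫⁻ ω, ENNReal.ofReal
          (if ε * Real.sqrt (n + 1) ≤ |D (n + 1) ω| then |D (n + 1) ω| else 0) ∂μ) ≠ ∞) ∧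
    (∃ δ : ℝ, 0 < δ ∧
      (∑' n : ℕ, (((n : ℝ≥0∞) + 1) ^ 2)⁻¹ *
        ∫⁻ ω, ENNReal.ofReal
          (if |D (n + 1) ω| ≤ δ * Real.sqrt (n + 1) then (D (n + 1) ω) ^ 4 else 0) ∂μ) ≠ ∞) := by
  have hq2 : 2 < min p 3 := lt_min hp (by norm_num)
  obtain ⟨K, hK⟩ := moments P u C b hu p hp g M hg x hx μ hμ (min p 3) (by linarith)
    (min_le_left _ _)
  have hq3 : min p 3 ≤ 3 := min_le_right _ _
  generalize min p 3 = q at hq2 hK hq3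
  set c : ℕ → ℝ≥0∞ := fun k => ∫⁻ ω, ‖D k ω‖ₑ ^ q ∂μ with hc
  have hK' : ∀ n : ℕ, ∑ k ∈ Finset.range n, c k ≤ K * ((n : ℝ≥0∞) + 1) := by
    intro n
    simpa only [hc, hD] using hK n
  have hen : ∀ k ω, ‖D k ω‖ₑ = ENNReal.ofReal |D k ω| := fun k ω => by
    rw [Real.enorm_eq_ofReal_abs]
  have hlow : ∀ (j k : ℕ) (a : ℝ), 0 < a → (j : ℝ) ≤ q →
      ∫⁻ ω, ENNReal.ofReal (if a ≤ |D k ω| then |D k ω| ^ j else 0) ∂μ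
        ≤ ENNReal.ofReal (a ^ ((j : ℝ) - q)) * c k := by
    intro j k a ha hj
    rw [hc, ← lintegral_const_mul' _ _ ENNReal.ofReal_ne_top]
    refine lintegral_mono fun ω => ?_
    dsimp only
    split_ifs with h
    · rw [hen]; exact pow_lower a _ q j ha h hj
    · simp
  have hup : ∀ (k : ℕ) (a : ℝ), 
      ∫⁻ ω, ENNReal.ofReal (if |D k ω| ≤ a then |D k ω| ^ 4 else 0) ∂μ
        ≤ ENNReal.ofReal (a ^ ((4 : ℝ) - q)) * c k := by
    intro k a
    rw [hc, ← lintegral_const_mul' _ _ ENNReal.ofReal_ne_top]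
    refine lintegral_mono fun ω => ?_
    dsimp only
    split_ifs with h
    · rw [hen]
      exact_mod_cast pow_upper a _ q 4 (by norm_num) (abs_nonneg _) h (by linarith)
        (by push_cast; linarith)
    · simp
  have hKs : ∀ n : ℕ, ∑ k ∈ Finset.range n, c (k + 1) ≤ ((2 * K : ℝ≥0) : ℝ≥0∞) * ((n : ℝ≥0∞) + 1) := by
    intro n
    calc _ ≤ ∑ k ∈ Finset.range (n + 1), c k := by
          rw [Finset.sum_range_succ']; exact le_self_add
      _ ≤ _ := hK' (n + 1)
      _ ≤ K * (2 * ((n : ℝ≥0∞) + 1)) := by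
          gcongr
          push_cast
          rw [two_mul]
          gcongr
          exact le_add_self
      _ = _ := by push_cast; ring
  have hfin := abel_ennreal (2 * K) (fun n => c (n + 1)) (q / 2) (by linarith) hKs
  refine ⟨fun ε hε => ?_, fun ε hε => ?_, 1, one_pos, ?_⟩
  · have hlim : Tendsto (fun n : ℕ => ((2 * K : ℝ≥0) : ℝ≥0∞) *
        ENNReal.ofReal ((ε * Real.sqrt n) ^ ((2 : ℝ) - q))) atTop (nhds 0) := by
      have h1 : Tendsto (fun n : ℕ => (ε * Real.sqrt n) ^ ((2 : ℝ) - q)) atTop (nhds 0) := by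
        have h2 : Tendsto (fun n : ℕ => ε * Real.sqrt n) atTop atTop :=
          (Real.tendsto_sqrt_atTop.comp tendsto_natCast_atTop_atTop).const_mul_atTop hε
        have h3 := (tendsto_rpow_neg_atTop (show 0 < q - 2 by linarith)).comp h2
        simpa [Function.comp_def] using h3
      have h4 := ENNReal.Tendsto.const_mul (a := ((2 * K : ℝ≥0) : ℝ≥0∞))
        (ENNReal.tendsto_ofReal h1) (Or.inr ENNReal.coe_ne_top)
      simpa using h4
    refine tendsto_of_tendsto_of_tendsto_of_le_of_le' tendsto_const_nhds hlim
      (Eventually.of_forall fun _ => zero_le) ?_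
    filter_upwards [eventually_ge_atTop 1] with n hn
    have hn0 : (0 : ℝ) < n := by exact_mod_cast hn
    have ha : 0 < ε * Real.sqrt n := mul_pos hε (Real.sqrt_pos.2 hn0)
    calc _ ≤ (n : ℝ≥0∞)⁻¹ * ∑ k ∈ Finset.range n,
          ENNReal.ofReal ((ε * Real.sqrt n) ^ ((2 : ℝ) - q)) * c k := by
          gcongr with k
          have := hlow 2 k _ ha (by push_cast; linarith)
          simpa only [sq_abs, Nat.cast_ofNat] using this
      _ ≤ (n : ℝ≥0∞)⁻¹ * (ENNReal.ofReal ((ε * Real.sqrt n) ^ ((2 : ℝ) - q)) *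
            (K * (2 * n))) := by
          rw [← Finset.mul_sum]
          gcongr
          refine (hK' n).trans ?_
          rw [two_mul]
          gcongr
          exact_mod_cast hn
      _ = ((n : ℝ≥0∞)⁻¹ * n) * (((2 * K : ℝ≥0) : ℝ≥0∞) *
            ENNReal.ofReal ((ε * Real.sqrt n) ^ ((2 : ℝ) - q))) := by push_cast; ring
      _ = _ := by
          rw [ENNReal.inv_mul_cancel (by exact_mod_cast (by omega : n ≠ 0)) (by simp), one_mul]
  · refine ne_top_of_le_ne_top (ENNReal.mul_ne_top
      (ENNReal.ofReal_ne_top (r := ε ^ (1 - q))) hfin) ?_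
    rw [← ENNReal.tsum_mul_left]
    refine ENNReal.tsum_le_tsum fun n => ?_
    have hn : (0 : ℝ) < (n : ℝ) + 1 := by positivity
    have ha : 0 < ε * Real.sqrt (n + 1) := mul_pos hε (Real.sqrt_pos.2 hn)
    have h := hlow 1 (n + 1) _ ha (by push_cast; linarith)
    simp only [pow_one, Nat.cast_one] at h
    calc _ ≤ (ENNReal.ofReal (Real.sqrt (n + 1)))⁻¹ *
          (ENNReal.ofReal ((ε * Real.sqrt (n + 1)) ^ ((1 : ℝ) - q)) * c (n + 1)) := by
          gcongr
      _ = _ := by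
          rw [← mul_assoc, ← mul_assoc, ← ENNReal.ofReal_inv_of_pos (Real.sqrt_pos.2 hn),
            ← ENNReal.ofReal_mul (by positivity), ← ENNReal.ofReal_mul (by positivity)]
          congr 2
          rw [Real.mul_rpow hε.le (Real.sqrt_nonneg _), Real.sqrt_eq_rpow, ← Real.rpow_mul hn.le,
            ← Real.rpow_neg hn.le, mul_left_comm, ← Real.rpow_add hn]
          ring_nf
  · refine ne_top_of_le_ne_top hfin ?_
    refine ENNReal.tsum_le_tsum fun n => ?_
    have hn : (0 : ℝ) < (n : ℝ) + 1 := by positivity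
    have h := hup (n + 1) (1 * Real.sqrt (n + 1))
    have h4 : ∀ r : ℝ, |r| ^ 4 = r ^ 4 := fun r => by
      rw [← abs_pow, abs_of_nonneg (by positivity)]
    simp only [h4] at h
    calc _ ≤ (((n : ℝ≥0∞) + 1) ^ 2)⁻¹ *
          (ENNReal.ofReal ((1 * Real.sqrt (n + 1)) ^ ((4 : ℝ) - q)) * c (n + 1)) := by
          gcongr
      _ = _ := by
          have e : (((n : ℝ≥0∞) + 1) ^ 2)⁻¹ = ENNReal.ofReal (((n : ℝ) + 1) ^ (-2 : ℝ)) := by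
            rw [Real.rpow_neg hn.le, ENNReal.ofReal_inv_of_pos (by positivity), Real.rpow_two,
              ENNReal.ofReal_pow hn.le, ENNReal.ofReal_add (by positivity) (by positivity)]
            simp
          rw [e, ← mul_assoc, ← ENNReal.ofReal_mul (by positivity)]
          congr 2
          rw [one_mul, Real.sqrt_eq_rpow, ← Real.rpow_mul hn.le, ← Real.rpow_add hn]
          ring_nf
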